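/- arXiv:0910.5339 — 7 statements merged into one kernel-verified Lean document; each statement's English description precedes it below -/
import Mathlib

section
/- For real numbers λ₁, λ₂ ≥ 0, there exists x > 0 such that x − (x+λ₁)(x+λ₂) > 0 if and only if √λ₁ + √λ₂ < 1. -/
/-!
Divided by `x > 0`, the inequality `(x + λ₁) * (x + λ₂) < x` reads
`x + λ₁ * λ₂ / x < 1 - λ₁ - λ₂`. By AM-GM the infimum of the left side over `x > 0` is
`2 * √(λ₁ * λ₂)`, and `2 * √(λ₁ * λ₂) < 1 - λ₁ - λ₂` means `(√λ₁ + √λ₂) ^ 2 < 1`.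
-/

section LinearOrderedField

variable {K : Type*} [Field K] [LinearOrder K] [IsStrictOrderedRing K]

theorem exists_pos_sq_add_sq_lt_mul_iff {m s : K} (hm : 0 ≤ m) :
    (∃ x : K, 0 < x ∧ x ^ 2 + m ^ 2 < s * x) ↔ 2 * m < s := by
  constructor
  · rintro ⟨x, hx, hlt⟩
    refine lt_of_mul_lt_mul_right ?_ hx.le
    calc
      2 * m * x = 2 * x * m := by ring
      _ ≤ x ^ 2 + m ^ 2 := two_mul_le_add_sq x m
      _ < s * x := hlt
  · intro hs
    -- The minimizer `x = m` of `x + m ^ 2 / x` is not positive when `m = 0`; the vertex `s / 2` of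
    -- `x ^ 2 - s * x + m ^ 2` always is.
    have hms : m < s / 2 := by linarith
    refine ⟨s / 2, hm.trans_lt hms, ?_⟩
    calc
      (s / 2) ^ 2 + m ^ 2 < (s / 2) ^ 2 + (s / 2) ^ 2 := by gcongr
      _ = s * (s / 2) := by ring

theorem exists_pos_add_sq_mul_add_sq_lt_mul_iff {a b c : K} (hab : 0 ≤ a * b) :
    (∃ x : K, 0 < x ∧ (x + a ^ 2) * (x + b ^ 2) < c * x) ↔ (a + b) ^ 2 < c := by
  have expand_iff (x : K) : (x + a ^ 2) * (x + b ^ 2) < c * x ↔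
      x ^ 2 + (a * b) ^ 2 < (c - a ^ 2 - b ^ 2) * x := by
    constructor <;> intro h <;> linarith
  calc
    (∃ x : K, 0 < x ∧ (x + a ^ 2) * (x + b ^ 2) < c * x)
      ↔ ∃ x : K, 0 < x ∧ x ^ 2 + (a * b) ^ 2 < (c - a ^ 2 - b ^ 2) * x := by simp only [expand_iff]
    _ ↔ 2 * (a * b) < c - a ^ 2 - b ^ 2 := exists_pos_sq_add_sq_lt_mul_iff hab
    _ ↔ (a + b) ^ 2 < c := by constructor <;> intro h <;> linarith [add_sq a b]

end LinearOrderedField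

/-- For real numbers λ₁, λ₂ ≥ 0, there exists x > 0 such that
x − (x+λ₁)(x+λ₂) > 0 if and only if √λ₁ + √λ₂ < 1. -/
theorem stmt_0 (l1 l2 : ℝ) (h1 : 0 ≤ l1) (h2 : 0 ≤ l2) :
    (∃ x : ℝ, 0 < x ∧ x - (x + l1) * (x + l2) > 0) ↔
      Real.sqrt l1 + Real.sqrt l2 < 1 := by
  calc
    (∃ x : ℝ, 0 < x ∧ x - (x + l1) * (x + l2) > 0)
      ↔ ∃ x : ℝ, 0 < x ∧ (x + √l1 ^ 2) * (x + √l2 ^ 2) < 1 * x := by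
        simp only [gt_iff_lt, sub_pos, Real.sq_sqrt h1, Real.sq_sqrt h2, one_mul]
    _ ↔ (√l1 + √l2) ^ 2 < 1 := exists_pos_add_sq_mul_add_sq_lt_mul_iff (by positivity)
    _ ↔ √l1 + √l2 < 1 := sq_lt_one_iff₀ (by positivity)
end

section
/- Let λ₁, λ₂ ≥ 0. If there exist q₁, q₂ ∈ [0,1] such that λ₁ < q₁(1−q₂) and λ₂ < q₂(1−q₁), then √λ₁ + √λ₂ < 1. -/
theorem sqrt_mul_le_half_add {a b : ℝ} (ha : 0 ≤ a) (hb : 0 ≤ b) : √(a * b) ≤ (a + b) / 2 := by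
  lift a to NNReal using ha
  lift b to NNReal using hb
  rw [← NNReal.coe_mul, ← Real.coe_sqrt]
  exact_mod_cast NNReal.sqrt_mul_le_half_add a b

theorem sqrt_mul_one_sub_add_sqrt_mul_one_sub_le_one {p q : ℝ}
    (hp : p ∈ Set.Icc 0 1) (hq : q ∈ Set.Icc 0 1) :
    √(p * (1 - q)) + √(q * (1 - p)) ≤ 1 :=
  calc √(p * (1 - q)) + √(q * (1 - p))
      ≤ (p + (1 - q)) / 2 + (q + (1 - p)) / 2 :=
        add_le_add (sqrt_mul_le_half_add hp.1 (sub_nonneg.mpr hq.2))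
          (sqrt_mul_le_half_add hq.1 (sub_nonneg.mpr hp.2))
    _ = 1 := by ring

/-- If there exist q₁, q₂ ∈ [0,1] with λ₁ < q₁(1−q₂) and λ₂ < q₂(1−q₁),
then √λ₁ + √λ₂ < 1. -/
theorem stmt_2 (l1 l2 : ℝ) (h1 : 0 ≤ l1) (h2 : 0 ≤ l2)
    (h : ∃ q1 ∈ Set.Icc (0:ℝ) 1, ∃ q2 ∈ Set.Icc (0:ℝ) 1,
      l1 < q1 * (1 - q2) ∧ l2 < q2 * (1 - q1)) :
    Real.sqrt l1 + Real.sqrt l2 < 1 := by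
  obtain ⟨q1, hq1, q2, hq2, hl1, hl2⟩ := h
  calc √l1 + √l2
      < √(q1 * (1 - q2)) + √(q2 * (1 - q1)) :=
        add_lt_add (Real.sqrt_lt_sqrt h1 hl1) (Real.sqrt_lt_sqrt h2 hl2)
    _ ≤ 1 := sqrt_mul_one_sub_add_sqrt_mul_one_sub_le_one hq1 hq2
end

section
/- Let λ₁, λ₂ ≥ 0 with √λ₁ + √λ₂ < 1. Then there exist q₁, q₂ ∈ (0,1) such that λ₁ < q₁(1−q₂) and λ₂ < q₂(1−q₁). -/
theorem sqrt_add_sqrt_lt_iff {x y c : ℝ} :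
    √x + √y < c ↔ ∃ p ∈ Set.Ioo 0 c, x < p ^ 2 ∧ y < (c - p) ^ 2 := by
  constructor
  · intro h
    obtain ⟨p, hxp, hpy⟩ : ∃ p, √x < p ∧ p < c - √y := exists_between (lt_sub_right_of_add_lt h)
    have hyp : √y < c - p := lt_sub_comm.mp hpy
    have hp : 0 < p := (Real.sqrt_nonneg x).trans_lt hxp
    have hcp : 0 < c - p := (Real.sqrt_nonneg y).trans_lt hyp
    exact ⟨p, ⟨hp, sub_pos.mp hcp⟩, (Real.sqrt_lt' hp).mp hxp, (Real.sqrt_lt' hcp).mp hyp⟩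
  · rintro ⟨p, ⟨hp, hpc⟩, hx, hy⟩
    calc √x + √y < p + (c - p) :=
          add_lt_add ((Real.sqrt_lt' hp).mpr hx) ((Real.sqrt_lt' (sub_pos.mpr hpc)).mpr hy)
      _ = c := add_sub_cancel p c

/-- If λ₁, λ₂ ≥ 0 and √λ₁ + √λ₂ < 1, then there exist q₁, q₂ ∈ (0,1) with
λ₁ < q₁(1−q₂) and λ₂ < q₂(1−q₁). -/
theorem stmt_3 (l1 l2 : ℝ) (h1 : 0 ≤ l1) (h2 : 0 ≤ l2)
    (h : Real.sqrt l1 + Real.sqrt l2 < 1) :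
    ∃ q1 ∈ Set.Ioo (0:ℝ) 1, ∃ q2 ∈ Set.Ioo (0:ℝ) 1,
      l1 < q1 * (1 - q2) ∧ l2 < q2 * (1 - q1) := by
  obtain ⟨p, ⟨hp0, hp1⟩, hl1, hl2⟩ := sqrt_add_sqrt_lt_iff.mp h
  -- On the line `q1 + q2 = 1` the two service rates are `q1 ^ 2` and `q2 ^ 2`.
  refine ⟨p, ⟨hp0, hp1⟩, 1 - p, ⟨sub_pos.mpr hp1, sub_lt_self 1 hp0⟩, ?_, ?_⟩
  · rwa [sub_sub_cancel, ← sq]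
  · rwa [← sq]
end

section
/- Let λ₁, λ₂ ≥ 0 and ρ₁, ρ₂ ∈ (0,1] satisfy √λ₁ + √λ₂ < 1, λ₁ < ρ₁, and λ₂ < ρ₂. Then there exist q₁, q₂ ∈ [0,1] such that λ₁ < q₁(1−q₂) ≤ ρ₁ and λ₂ < q₂(1−q₁) ≤ ρ₂. -/
/-!
Since `q₁(1 - q₂) - q₂(1 - q₁) = q₁ - q₂`, a point of the line `q₁ - q₂ = x - y` attains the pair
`(x, y)` as soon as its first product is `x`. Along this line the first product is at most `x`
where the line enters the unit square, and equals `((1 + x - y) / 2)²` at the midpoint of its chord,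
which is at least `x` because `√x + √y ≤ 1` gives `y ≤ (1 - √x)²`, i.e. `2√x ≤ 1 + x - y`. By
continuity every `(x, y)` with `√x + √y ≤ 1` is therefore attained, and `(λ₁, λ₂)` can be moved up
slightly in both coordinates without leaving this region.
-/

open Set Topology

theorem exists_mem_Ioo_lt_of_continuousWithinAt {α β : Type*} [LinearOrder α] [TopologicalSpace α]
    [OrderTopology α] [DenselyOrdered α] [LinearOrder β] [TopologicalSpace β] [ClosedIciTopology β]
    {f : α → β} {a b : α} {c : β} (hf : ContinuousWithinAt f (Ioi a) a) (hab : a < b)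
    (hc : f a < c) : ∃ x ∈ Ioo a b, f x < c := by
  have : (𝓝[>] a).NeBot := nhdsGT_neBot_of_exists_gt ⟨b, hab⟩
  exact (Filter.Eventually.and (Ioo_mem_nhdsGT hab) (hf.eventually_lt_const hc)).exists

theorem two_mul_sqrt_le_one_add_sub {x y : ℝ} (hx : 0 ≤ x) (hxy : √x + √y ≤ 1) :
    2 * √x ≤ 1 + x - y := by
  have hy : y ≤ (1 - √x) ^ 2 := (Real.sqrt_le_iff.mp (le_sub_iff_add_le'.mpr hxy)).2
  linarith [Real.sq_sqrt hx, sub_sq 1 (√x)]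

theorem exists_mem_Icc_mul_one_sub_sub_eq {d t : ℝ} (hd : |d| ≤ 1) (hdt : max 0 d ≤ t)
    (ht : t ≤ ((1 + d) / 2) ^ 2) :
    ∃ q ∈ Icc (max 0 d) ((1 + d) / 2), q * (1 - (q - d)) = t := by
  obtain ⟨hd_lower, hd_upper⟩ := abs_le.mp hd
  have hchord : max 0 d ≤ (1 + d) / 2 := max_le (by linarith) (by linarith)
  have hentry : max 0 d * (1 - (max 0 d - d)) = max 0 d := by
    rcases le_total 0 d with h | h <;> simp [h]
  have hmid : (1 + d) / 2 * (1 - ((1 + d) / 2 - d)) = ((1 + d) / 2) ^ 2 := by ring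
  have hcont : ContinuousOn (fun q ↦ q * (1 - (q - d))) (Icc (max 0 d) ((1 + d) / 2)) := by
    fun_prop
  exact intermediate_value_Icc hchord hcont ⟨hentry.trans_le hdt, ht.trans_eq hmid.symm⟩

theorem exists_mul_one_sub_eq_of_sqrt_add_sqrt_le_one {x y : ℝ} (hx : 0 ≤ x) (hy : 0 ≤ y)
    (hxy : √x + √y ≤ 1) :
    ∃ q₁ ∈ Icc (0 : ℝ) 1, ∃ q₂ ∈ Icc (0 : ℝ) 1, q₁ * (1 - q₂) = x ∧ q₂ * (1 - q₁) = y := by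
  have hx_one : x ≤ 1 := Real.sqrt_le_one.mp (by linarith [Real.sqrt_nonneg y])
  have hy_one : y ≤ 1 := Real.sqrt_le_one.mp (by linarith [Real.sqrt_nonneg x])
  have hd : |x - y| ≤ 1 := abs_le.mpr ⟨by linarith, by linarith⟩
  have hentry : max 0 (x - y) ≤ x := max_le hx (sub_le_self x hy)
  have hmid : x ≤ ((1 + (x - y)) / 2) ^ 2 :=
    (Real.sqrt_le_iff.mp (by linarith [two_mul_sqrt_le_one_add_sub hx hxy])).2
  obtain ⟨q, ⟨hq_lower, hq_upper⟩, hq⟩ := exists_mem_Icc_mul_one_sub_sub_eq hd hentry hmid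
  obtain ⟨hq_nonneg, hq_sub⟩ := max_le_iff.mp hq_lower
  exact ⟨q, ⟨hq_nonneg, by linarith⟩, q - (x - y), ⟨by linarith, by linarith⟩, hq,
    by linear_combination hq⟩

theorem stmt_4_general {l₁ l₂ r₁ r₂ : ℝ} (hl₁ : 0 ≤ l₁) (hl₂ : 0 ≤ l₂) (hsum : √l₁ + √l₂ < 1)
    (hlr₁ : l₁ < r₁) (hlr₂ : l₂ < r₂) :
    ∃ q₁ ∈ Icc (0 : ℝ) 1, ∃ q₂ ∈ Icc (0 : ℝ) 1,
      q₁ * (1 - q₂) ∈ Ioo l₁ r₁ ∧ q₂ * (1 - q₁) ∈ Ioo l₂ r₂ := by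
  obtain ⟨x, hx, hxsum⟩ : ∃ x ∈ Ioo l₁ r₁, √x + √l₂ < 1 :=
    exists_mem_Ioo_lt_of_continuousWithinAt (by fun_prop) hlr₁ hsum
  obtain ⟨y, hy, hxysum⟩ : ∃ y ∈ Ioo l₂ r₂, √x + √y < 1 :=
    exists_mem_Ioo_lt_of_continuousWithinAt (by fun_prop) hlr₂ hxsum
  obtain ⟨q₁, hq₁, q₂, hq₂, rfl, rfl⟩ := exists_mul_one_sub_eq_of_sqrt_add_sqrt_le_one
    (hl₁.trans hx.1.le) (hl₂.trans hy.1.le) hxysum.le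
  exact ⟨q₁, hq₁, q₂, hq₂, hx, hy⟩

/-- Under √λ₁ + √λ₂ < 1, λ₁ < ρ₁ and λ₂ < ρ₂, the secrecy-stability region
is nonempty: there exist q₁, q₂ ∈ [0,1] with λ₁ < q₁(1−q₂) ≤ ρ₁ and
λ₂ < q₂(1−q₁) ≤ ρ₂. -/
theorem stmt_4 (l1 l2 r1 r2 : ℝ) (h1 : 0 ≤ l1) (h2 : 0 ≤ l2)
    (hr1 : r1 ∈ Set.Ioc (0:ℝ) 1) (hr2 : r2 ∈ Set.Ioc (0:ℝ) 1)
    (hsum : Real.sqrt l1 + Real.sqrt l2 < 1)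
    (hlr1 : l1 < r1) (hlr2 : l2 < r2) :
    ∃ q1 ∈ Set.Icc (0:ℝ) 1, ∃ q2 ∈ Set.Icc (0:ℝ) 1,
      (l1 < q1 * (1 - q2) ∧ q1 * (1 - q2) ≤ r1) ∧
      (l2 < q2 * (1 - q1) ∧ q2 * (1 - q1) ≤ r2) := by
  obtain ⟨q1, hq1, q2, hq2, hx, hy⟩ := stmt_4_general h1 h2 hsum hlr1 hlr2
  exact ⟨q1, hq1, q2, hq2, ⟨hx.1, hx.2.le⟩, hy.1, hy.2.le⟩
end

section
/- Let ρ₁, ρ₂ ≥ 0 with √ρ₁ + √ρ₂ ≤ 1. Then there exist q₁, q₂ ∈ [0,1] such that q₁(1−q₂) = ρ₁ and q₂(1−q₁) = ρ₂. -/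
/-!
In the variables `x = q₁` and `y = 1 - q₂` the system reads `x * y = r1`, `(1 - x) * (1 - y) = r2`,
which prescribes the product `r1` and the sum `1 + r1 - r2` of `x` and `y`. Nonnegative numbers with
these data exist by the converse of AM-GM, since `√r1 + √r2 ≤ 1` gives `r2 ≤ (1 - √r1) ^ 2`, that is
`2 * √r1 ≤ 1 + r1 - r2`. The symmetric inequality makes the sum of `1 - x` and `1 - y` nonnegative;
as their product `r2` is nonnegative too, so are both numbers.
-/

theorem exists_add_eq_and_mul_eq_of_isSquare {K : Type*} [Field K] [NeZero (2 : K)] {s p : K}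
    (h : IsSquare (s ^ 2 - 4 * p)) : ∃ x y : K, x + y = s ∧ x * y = p := by
  obtain ⟨d, hd⟩ := h
  have hdiscrim : discrim 1 (-s) p = d * d := by
    rw [discrim, ← hd]
    ring
  obtain ⟨x, hx⟩ := exists_quadratic_eq_zero one_ne_zero ⟨d, hdiscrim⟩
  exact ⟨x, s - x, add_sub_cancel x s, by linear_combination -hx⟩

theorem nonneg_and_nonneg_of_add_nonneg_of_mul_nonneg {R : Type*} [Ring R] [LinearOrder R]
    [IsStrictOrderedRing R] {x y : R} (hadd : 0 ≤ x + y) (hmul : 0 ≤ x * y) : 0 ≤ x ∧ 0 ≤ y := by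
  rcases mul_nonneg_iff.mp hmul with hnonneg | ⟨hx, hy⟩
  · exact hnonneg
  · exact ⟨hadd.trans (add_le_of_nonpos_right hy), hadd.trans (add_le_of_nonpos_left hx)⟩

theorem exists_nonneg_add_eq_and_mul_eq_of_two_mul_sqrt_le {s p : ℝ} (hp : 0 ≤ p)
    (h : 2 * √p ≤ s) : ∃ x y : ℝ, 0 ≤ x ∧ 0 ≤ y ∧ x + y = s ∧ x * y = p := by
  have hs : 0 ≤ s := h.trans' (by positivity)
  have hdiscrim : 0 ≤ s ^ 2 - 4 * p := by
    rw [sub_nonneg]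
    calc
      4 * p = (2 * √p) ^ 2 := by linear_combination -4 * Real.sq_sqrt hp
      _ ≤ s ^ 2 := by gcongr
  obtain ⟨x, y, hadd, hmul⟩ :=
    exists_add_eq_and_mul_eq_of_isSquare (Real.isSquare_iff.mpr hdiscrim)
  obtain ⟨hx, hy⟩ := nonneg_and_nonneg_of_add_nonneg_of_mul_nonneg (hadd ▸ hs) (hmul ▸ hp)
  exact ⟨x, y, hx, hy, hadd, hmul⟩

theorem two_mul_mul_sqrt_le_of_sqrt_add_sqrt_le {a b c : ℝ} (ha : 0 ≤ a) (h : √a + √b ≤ c) :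
    2 * c * √a ≤ c ^ 2 + a - b := by
  have hb : b ≤ (c - √a) ^ 2 := (Real.sqrt_le_iff.mp (le_sub_iff_add_le'.mpr h)).2
  rw [sub_sq, Real.sq_sqrt ha] at hb
  linarith

/-- If ρ₁, ρ₂ ≥ 0 and √ρ₁ + √ρ₂ ≤ 1, then there exist q₁, q₂ ∈ [0,1] with
q₁(1−q₂) = ρ₁ and q₂(1−q₁) = ρ₂. -/
theorem stmt_5 (r1 r2 : ℝ) (h1 : 0 ≤ r1) (h2 : 0 ≤ r2)
    (h : Real.sqrt r1 + Real.sqrt r2 ≤ 1) :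
    ∃ q1 ∈ Set.Icc (0:ℝ) 1, ∃ q2 ∈ Set.Icc (0:ℝ) 1,
      q1 * (1 - q2) = r1 ∧ q2 * (1 - q1) = r2 := by
  have hsqrt1 : 2 * √r1 ≤ 1 + r1 - r2 := by
    simpa using two_mul_mul_sqrt_le_of_sqrt_add_sqrt_le h1 h
  have hsqrt2 : 2 * √r2 ≤ 1 + r2 - r1 := by
    simpa using two_mul_mul_sqrt_le_of_sqrt_add_sqrt_le h2 ((add_comm _ _).trans_le h)
  obtain ⟨x, y, hx, hy, hadd, hmul⟩ :=
    exists_nonneg_add_eq_and_mul_eq_of_two_mul_sqrt_le h1 hsqrt1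
  have hmul' : (1 - x) * (1 - y) = r2 := by linear_combination hmul - hadd
  have hadd' : 0 ≤ (1 - x) + (1 - y) := by linarith [Real.sqrt_nonneg r2]
  obtain ⟨hx', hy'⟩ := nonneg_and_nonneg_of_add_nonneg_of_mul_nonneg hadd' (hmul' ▸ h2)
  refine ⟨x, ⟨hx, sub_nonneg.mp hx'⟩, 1 - y, ⟨hy', sub_le_self 1 hy⟩, ?_, ?_⟩
  · rw [sub_sub_cancel, hmul]
  · rw [mul_comm, hmul']
end

section
/- Let ρ₁, ρ₂ ∈ [0,1] with √ρ₁ + √ρ₂ ≤ 1, and set D = (1+ρ₁−ρ₂)² − 4ρ₁. Then D ≥ 0, and the pair q₁ = (1+ρ₁−ρ₂−√D)/2, q₂ = (1−ρ₁+ρ₂−√D)/2 satisfies q₁, q₂ ∈ [0,1], q₁(1−q₂) = ρ₁, and q₂(1−q₁) = ρ₂. -/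
/-!
Subtracting the boundary equations gives `q₁ - q₂ = ρ₁ - ρ₂`, so `q₁` and `1 - q₂` have sum
`1 + ρ₁ - ρ₂` and product `ρ₁`: they are the two roots of `X² - (1 + ρ₁ - ρ₂) X + ρ₁`.
Exchanging the users gives a quadratic with the same discriminant. The roots are real because
`√ρ₂ ≤ 1 - √ρ₁` squares to `2 √ρ₁ ≤ 1 + ρ₁ - ρ₂`.
-/

/-- The smaller root of the monic quadratic `X² - s X + p`, parametrized by the sum `s` and the
product `p` of its roots; the probability `q₁` is the case `s = 1 + ρ₁ - ρ₂`, `p = ρ₁`. If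
the discriminant is negative, `Real.sqrt` makes this `s / 2`. -/
noncomputable def smallerRoot (s p : ℝ) : ℝ :=
  (s - √(discrim 1 s p)) / 2

section Quadratic

variable {s p : ℝ}

lemma discrim_one_nonneg_of_sqrt_le_half (h : √p ≤ s / 2) : 0 ≤ discrim 1 s p := by
  have hp : p ≤ (s / 2) ^ 2 := (Real.sqrt_le_iff.mp h).2
  rw [discrim]
  linarith

lemma smallerRoot_nonneg (hs : 0 ≤ s) (hp : 0 ≤ p) : 0 ≤ smallerRoot s p := by
  have hsqrt : √(discrim 1 s p) ≤ s :=
    Real.sqrt_le_iff.mpr ⟨hs, by rw [discrim]; linarith⟩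
  rw [smallerRoot]
  linarith

lemma smallerRoot_le_half (s p : ℝ) : smallerRoot s p ≤ s / 2 := by
  have hsqrt := Real.sqrt_nonneg (discrim 1 s p)
  rw [smallerRoot]
  linarith

lemma smallerRoot_mul_sub_smallerRoot (h : 0 ≤ discrim 1 s p) :
    smallerRoot s p * (s - smallerRoot s p) = p :=
  calc
    smallerRoot s p * (s - smallerRoot s p) = (s ^ 2 - √(discrim 1 s p) ^ 2) / 4 := by
      rw [smallerRoot]; ring
    _ = p := by rw [Real.sq_sqrt h, discrim]; ring

end Quadratic

section Boundary

lemma discrim_one_add_sub_comm {R : Type*} [CommRing R] (a b : R) :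
    discrim 1 (1 + a - b) a = discrim 1 (1 + b - a) b := by
  simp only [discrim]
  ring

variable {a b : ℝ}

lemma sqrt_le_half_one_add_sub (ha : 0 ≤ a) (h : √a + √b ≤ 1) : √a ≤ (1 + a - b) / 2 := by
  have hb : b ≤ (1 - √a) ^ 2 := (Real.sqrt_le_iff.mp (le_sub_iff_add_le'.mpr h)).2
  linarith [Real.sq_sqrt ha]

lemma one_sub_smallerRoot_swap (a b : ℝ) :
    1 - smallerRoot (1 + b - a) b = 1 + a - b - smallerRoot (1 + a - b) a := by
  simp only [smallerRoot, discrim_one_add_sub_comm b a]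
  ring

lemma smallerRoot_mul_one_sub_smallerRoot_swap (h : 0 ≤ discrim 1 (1 + a - b) a) :
    smallerRoot (1 + a - b) a * (1 - smallerRoot (1 + b - a) b) = a := by
  rw [one_sub_smallerRoot_swap, smallerRoot_mul_sub_smallerRoot h]

lemma smallerRoot_one_add_sub_mem_Icc (ha : a ∈ Set.Icc (0 : ℝ) 1) (hb : b ∈ Set.Icc (0 : ℝ) 1) :
    smallerRoot (1 + a - b) a ∈ Set.Icc (0 : ℝ) 1 :=
  ⟨smallerRoot_nonneg (by linarith [ha.1, hb.2]) ha.1,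
    (smallerRoot_le_half _ _).trans (by linarith [ha.2, hb.1])⟩

end Boundary

/-- Explicit solution of the secrecy-boundary equations: for ρ₁, ρ₂ ∈ [0,1] with
√ρ₁ + √ρ₂ ≤ 1 and D = (1+ρ₁−ρ₂)² − 4ρ₁, we have D ≥ 0 and
q₁ = (1+ρ₁−ρ₂−√D)/2, q₂ = (1−ρ₁+ρ₂−√D)/2 lie in [0,1] and satisfy
q₁(1−q₂) = ρ₁, q₂(1−q₁) = ρ₂. -/
theorem stmt_6 (r1 r2 D q1 q2 : ℝ)
    (hr1 : r1 ∈ Set.Icc (0:ℝ) 1) (hr2 : r2 ∈ Set.Icc (0:ℝ) 1)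
    (h : Real.sqrt r1 + Real.sqrt r2 ≤ 1)
    (hD : D = (1 + r1 - r2) ^ 2 - 4 * r1)
    (hq1 : q1 = (1 + r1 - r2 - Real.sqrt D) / 2)
    (hq2 : q2 = (1 - r1 + r2 - Real.sqrt D) / 2) :
    0 ≤ D ∧ q1 ∈ Set.Icc (0:ℝ) 1 ∧ q2 ∈ Set.Icc (0:ℝ) 1 ∧
      q1 * (1 - q2) = r1 ∧ q2 * (1 - q1) = r2 := by
  have hDisc : D = discrim 1 (1 + r1 - r2) r1 := by rw [hD, discrim, mul_one]
  have hDiscSwap : D = discrim 1 (1 + r2 - r1) r2 := hDisc.trans (discrim_one_add_sub_comm r1 r2)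
  have hD0 : 0 ≤ D :=
    hDisc ▸ discrim_one_nonneg_of_sqrt_le_half (sqrt_le_half_one_add_sub hr1.1 h)
  have hq1Root : q1 = smallerRoot (1 + r1 - r2) r1 := by rw [hq1, hDisc, smallerRoot]
  have hq2Root : q2 = smallerRoot (1 + r2 - r1) r2 := by
    rw [hq2, hDiscSwap, smallerRoot, sub_add_eq_add_sub]
  rw [hq1Root, hq2Root]
  exact ⟨hD0,
    smallerRoot_one_add_sub_mem_Icc hr1 hr2, smallerRoot_one_add_sub_mem_Icc hr2 hr1,
    smallerRoot_mul_one_sub_smallerRoot_swap (hDisc ▸ hD0),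
    smallerRoot_mul_one_sub_smallerRoot_swap (hDiscSwap ▸ hD0)⟩
end

section
/- Let a, b ∈ [0,1] and λ₁, λ₂ ≥ 0 with √λ₁ + √λ₂ ≤ 1, and let K = {(q₁,q₂) ∈ [0,1]² : q₁(1−q₂) ≥ λ₁ and q₂(1−q₁) ≥ λ₂}. Then the points P₁ = (√λ₁, 1−√λ₁) and P₂ = (1−√λ₂, √λ₂) both belong to K, and for every (q₁,q₂) ∈ K, S(q₁,q₂) = a·q₁(1−q₂) + b·q₂(1−q₁) ≤ max(S(P₁), S(P₂)) = max(a·λ₁ + b·(1−√λ₁)², a·(1−√λ₂)² + b·λ₂). -/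
/-!
With `x = √(q₁(1 - q₂))` and `y = √(q₂(1 - q₁))` the throughput is `a x² + b y²`. By AM-GM,
`x + y ≤ 1`, so replacing `(q₁, q₂)` by the point `(x, 1 - x)` of the diagonal `q₁ + q₂ = 1` keeps
the success rate of user 1 and does not decrease that of user 2. On the diagonal the throughput is
the convex function `a x² + b (1 - x)²` of `x ∈ [√λ₁, 1 - √λ₂]`, maximal at an endpoint.
-/

namespace SlottedAloha

variable {a b l1 l2 q r : ℝ} {p : ℝ × ℝ}

/-- The closed stability region of the two-user dominant slotted ALOHA system with arrival rates
`l1` and `l2`, as a set of pairs `(q₁, q₂)` of transmission probabilities. -/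
def stabilityRegion (l1 l2 : ℝ) : Set (ℝ × ℝ) :=
  {p | p.1 ∈ Set.Icc (0 : ℝ) 1 ∧ p.2 ∈ Set.Icc (0 : ℝ) 1 ∧
    l1 ≤ p.1 * (1 - p.2) ∧ l2 ≤ p.2 * (1 - p.1)}

/-- The throughput at the pair `p = (q₁, q₂)` of transmission probabilities, where `a` and `b` are
the channel success probabilities `1 - p_{f,1}` and `1 - p_{f,2}`; as weights they may be any real
numbers. -/
def throughput (a b : ℝ) (p : ℝ × ℝ) : ℝ :=
  a * (p.1 * (1 - p.2)) + b * (p.2 * (1 - p.1))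

lemma mk_one_sub_mem_stabilityRegion_iff (hq : q ∈ Set.Icc (0 : ℝ) 1) :
    (q, 1 - q) ∈ stabilityRegion l1 l2 ↔ l1 ≤ q ^ 2 ∧ l2 ≤ (1 - q) ^ 2 := by
  have hq' : 1 - q ∈ Set.Icc (0 : ℝ) 1 := Set.Icc.one_sub_mem hq
  simp only [stabilityRegion, Set.mem_ofPred_eq, hq, hq', true_and, sub_sub_cancel, sq]

lemma throughput_mk_one_sub (a b q : ℝ) :
    throughput a b (q, 1 - q) = a * q ^ 2 + b * (1 - q) ^ 2 := by
  simp only [throughput, sub_sub_cancel, sq]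

lemma convexOn_throughput_mk_one_sub (ha : 0 ≤ a) (hb : 0 ≤ b) :
    ConvexOn ℝ Set.univ fun q ↦ throughput a b (q, 1 - q) := by
  have hsq : ConvexOn ℝ Set.univ fun q : ℝ ↦ q ^ 2 := even_two.convexOn_pow
  have hsq_one_sub : ConvexOn ℝ Set.univ fun q : ℝ ↦ (1 - q) ^ 2 :=
    (hsq.comp_affineMap (AffineMap.const ℝ ℝ 1 - AffineMap.id ℝ ℝ)).congr fun _ _ ↦ rfl
  simp only [throughput_mk_one_sub]
  exact (hsq.smul ha).add (hsq_one_sub.smul hb)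

lemma sqrt_mul_le_half_add (hq : 0 ≤ q) (hr : 0 ≤ r) : √(q * r) ≤ (q + r) / 2 := by
  lift q to NNReal using hq
  lift r to NNReal using hr
  simpa only [Real.coe_sqrt, NNReal.coe_mul, NNReal.coe_div, NNReal.coe_add,
    NNReal.coe_ofNat] using NNReal.coe_le_coe.mpr (NNReal.sqrt_mul_le_half_add q r)

lemma sqrt_mul_one_sub_add_sqrt_mul_one_sub_le_one
    (hq : q ∈ Set.Icc (0 : ℝ) 1) (hr : r ∈ Set.Icc (0 : ℝ) 1) :
    √(q * (1 - r)) + √(r * (1 - q)) ≤ 1 := by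
  linarith [sqrt_mul_le_half_add hq.1 (sub_nonneg.mpr hr.2),
    sqrt_mul_le_half_add hr.1 (sub_nonneg.mpr hq.2)]

lemma throughput_le_throughput_mk_one_sub (hb : 0 ≤ b)
    (hp₁ : p.1 ∈ Set.Icc (0 : ℝ) 1) (hp₂ : p.2 ∈ Set.Icc (0 : ℝ) 1) :
    throughput a b p ≤ throughput a b (√(p.1 * (1 - p.2)), 1 - √(p.1 * (1 - p.2))) := by
  have hrate₁ : √(p.1 * (1 - p.2)) ^ 2 = p.1 * (1 - p.2) :=
    Real.sq_sqrt (mul_nonneg hp₁.1 (sub_nonneg.mpr hp₂.2))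
  have hrate₂ : p.2 * (1 - p.1) ≤ (1 - √(p.1 * (1 - p.2))) ^ 2 :=
    (Real.sqrt_le_iff.mp
      (le_sub_iff_add_le'.mpr (sqrt_mul_one_sub_add_sqrt_mul_one_sub_le_one hp₁ hp₂))).2
  rw [throughput_mk_one_sub, hrate₁, throughput]
  gcongr

lemma throughput_le_max (ha : 0 ≤ a) (hb : 0 ≤ b) (hp : p ∈ stabilityRegion l1 l2) :
    throughput a b p ≤
      max (throughput a b (√l1, 1 - √l1)) (throughput a b (1 - √l2, √l2)) := by
  obtain ⟨hp₁, hp₂, hl1, hl2⟩ := hp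
  have hle : √(p.1 * (1 - p.2)) ≤ 1 - √l2 := by
    linarith [sqrt_mul_one_sub_add_sqrt_mul_one_sub_le_one hp₁ hp₂, Real.sqrt_le_sqrt hl2]
  have hendpoints := (convexOn_throughput_mk_one_sub ha hb).le_max_of_mem_Icc
    (Set.mem_univ √l1) (Set.mem_univ (1 - √l2)) ⟨Real.sqrt_le_sqrt hl1, hle⟩
  rw [sub_sub_cancel] at hendpoints
  exact (throughput_le_throughput_mk_one_sub hb hp₁ hp₂).trans hendpoints

lemma sqrt_mk_one_sub_mem_stabilityRegion (h1 : 0 ≤ l1) (hsum : √l1 + √l2 ≤ 1) :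
    (√l1, 1 - √l1) ∈ stabilityRegion l1 l2 := by
  have hmem : √l1 ∈ Set.Icc (0 : ℝ) 1 :=
    ⟨Real.sqrt_nonneg l1, by linarith [Real.sqrt_nonneg l2]⟩
  exact (mk_one_sub_mem_stabilityRegion_iff hmem).mpr
    ⟨(Real.sq_sqrt h1).ge, (Real.sqrt_le_iff.mp (le_sub_iff_add_le'.mpr hsum)).2⟩

lemma one_sub_mk_sqrt_mem_stabilityRegion (h2 : 0 ≤ l2) (hsum : √l1 + √l2 ≤ 1) :
    (1 - √l2, √l2) ∈ stabilityRegion l1 l2 := by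
  obtain ⟨h₂, h₁, hl2, hl1⟩ := sqrt_mk_one_sub_mem_stabilityRegion h2 (add_comm √l1 √l2 ▸ hsum)
  exact ⟨h₁, h₂, hl1, hl2⟩

end SlottedAloha

open SlottedAloha in
theorem stmt_10_general {a b l1 l2 : ℝ} (ha : 0 ≤ a) (hb : 0 ≤ b) (h1 : 0 ≤ l1) (h2 : 0 ≤ l2)
    (hsum : √l1 + √l2 ≤ 1) :
    (√l1, 1 - √l1) ∈ stabilityRegion l1 l2 ∧ (1 - √l2, √l2) ∈ stabilityRegion l1 l2 ∧
      (∀ p ∈ stabilityRegion l1 l2, throughput a b p ≤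
        max (throughput a b (√l1, 1 - √l1)) (throughput a b (1 - √l2, √l2))) ∧
      max (throughput a b (√l1, 1 - √l1)) (throughput a b (1 - √l2, √l2)) =
        max (a * l1 + b * (1 - √l1) ^ 2) (a * (1 - √l2) ^ 2 + b * l2) := by
  have hP1 : throughput a b (√l1, 1 - √l1) = a * l1 + b * (1 - √l1) ^ 2 := by
    rw [throughput_mk_one_sub, Real.sq_sqrt h1]
  have hP2 : throughput a b (1 - √l2, √l2) = a * (1 - √l2) ^ 2 + b * l2 := by
    simpa only [sub_sub_cancel, Real.sq_sqrt h2] using throughput_mk_one_sub a b (1 - √l2)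
  exact ⟨sqrt_mk_one_sub_mem_stabilityRegion h1 hsum, one_sub_mk_sqrt_mem_stabilityRegion h2 hsum,
    fun _ hp ↦ throughput_le_max ha hb hp, by rw [hP1, hP2]⟩

/-- Case (3) of Theorem 2: when √λ₁ + √λ₂ ≤ 1, the points P₁ = (√λ₁, 1−√λ₁)
and P₂ = (1−√λ₂, √λ₂) lie in the (closed) stability region K, and the
throughput on K is bounded by
max(S(P₁), S(P₂)) = max(a·λ₁ + b·(1−√λ₁)², a·(1−√λ₂)² + b·λ₂). -/
theorem stmt_10 (a b l1 l2 : ℝ)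
    (ha : a ∈ Set.Icc (0:ℝ) 1) (hb : b ∈ Set.Icc (0:ℝ) 1)
    (h1 : 0 ≤ l1) (h2 : 0 ≤ l2)
    (hsum : Real.sqrt l1 + Real.sqrt l2 ≤ 1)
    (K : Set (ℝ × ℝ))
    (hK : K = {p : ℝ × ℝ | p.1 ∈ Set.Icc (0:ℝ) 1 ∧ p.2 ∈ Set.Icc (0:ℝ) 1 ∧
      l1 ≤ p.1 * (1 - p.2) ∧ l2 ≤ p.2 * (1 - p.1)})
    (S : ℝ × ℝ → ℝ)
    (hS : S = fun p => a * (p.1 * (1 - p.2)) + b * (p.2 * (1 - p.1)))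
    (P1 P2 : ℝ × ℝ)
    (hP1 : P1 = (Real.sqrt l1, 1 - Real.sqrt l1))
    (hP2 : P2 = (1 - Real.sqrt l2, Real.sqrt l2)) :
    P1 ∈ K ∧ P2 ∈ K ∧ (∀ p ∈ K, S p ≤ max (S P1) (S P2)) ∧
      max (S P1) (S P2) =
        max (a * l1 + b * (1 - Real.sqrt l1) ^ 2)
            (a * (1 - Real.sqrt l2) ^ 2 + b * l2) := by
  subst hK hS hP1 hP2
  exact stmt_10_general ha.1 hb.1 h1 h2 hsum
end
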